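/- Let q = p^h > 4 with p prime, h ≥ 1, and let V be a quasi-Hermitian variety of PG(3,q^2) whose characteristic vector v^V belongs to C_p. If π is a plane of PG(3,q^2) with |π ∩ V| = q^3 + q^2 + 1, then every line of π meets π ∩ V in either 1, q+1, or q^2+1 points. -/

import Mathlib

/-!
Common framework: `ProjPoint F n` is the set of points of the projective space
PG(n-1, |F|) (so PG(r, q²) corresponds to `n = r + 1` and `Fintype.card F = q ^ 2`).
Projective subspaces of projective dimension `k` are the submodules of `Fin n → F`
of `finrank` equal to `k + 1`; lines have finrank 2, planes finrank 3 and
hyperplanes finrank `n - 1 = r`.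
-/

open Module Matrix

/-- The points of the projective space PG(n-1, |F|): one-dimensional subspaces
of `F^n`. -/
def ProjPoint (F : Type) [Field F] (n : ℕ) : Type :=
  {W : Submodule F (Fin n → F) // finrank F W = 1}

/-- The set of projective points lying in a given subspace `W`. -/
def pointsIn (F : Type) [Field F] (n : ℕ) (W : Submodule F (Fin n → F)) :
    Set (ProjPoint F n) :=
  {P | P.1 ≤ W}

/-- The number of points of `V` lying in the subspace `W`. -/
noncomputable def secant (F : Type) [Field F] (n : ℕ) (V : Set (ProjPoint F n))
    (W : Submodule F (Fin n → F)) : ℕ :=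
  (V ∩ pointsIn F n W).ncard

/-- The characteristic vector of a set of projective points, with values in `F_p`. -/
noncomputable def charVec (F : Type) [Field F] (p n : ℕ) (S : Set (ProjPoint F n)) :
    ProjPoint F n → ZMod p :=
  Set.indicator S 1

/-- `C_p`: the `F_p`-code spanned by the characteristic vectors of hyperplanes. -/
def hypCode (F : Type) [Field F] (p n : ℕ) :
    Submodule (ZMod p) (ProjPoint F n → ZMod p) :=
  Submodule.span (ZMod p)
    {v | ∃ H : Submodule F (Fin n → F), finrank F H = n - 1 ∧
      v = charVec F p n (pointsIn F n H)}

/-- A quasi-Hermitian variety of PG(r, q²): it has the size of a non-singular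
Hermitian variety and the same two intersection numbers with hyperplanes.
(All identities are stated multiplied through by `q² - 1`.) -/
def IsQuasiHermitian (F : Type) [Field F] (q r : ℕ)
    (V : Set (ProjPoint F (r + 1))) : Prop :=
  (V.ncard : ℤ) * ((q : ℤ) ^ 2 - 1)
      = ((q : ℤ) ^ (r + 1) + (-1) ^ r) * ((q : ℤ) ^ r - (-1) ^ r) ∧
  ∀ H : Submodule F (Fin (r + 1) → F), finrank F H = r →
    ((secant F (r + 1) V H : ℤ) * ((q : ℤ) ^ 2 - 1)
        = ((q : ℤ) ^ r + (-1) ^ (r - 1)) * ((q : ℤ) ^ (r - 1) - (-1) ^ (r - 1)) ∨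
     (secant F (r + 1) V H : ℤ) * ((q : ℤ) ^ 2 - 1)
        = ((q : ℤ) ^ 2 - 1)
          + (q : ℤ) ^ 2 * (((q : ℤ) ^ (r - 1) + (-1) ^ r) * ((q : ℤ) ^ (r - 2) - (-1) ^ r)))

/-- The zero set, in PG(n-1,|F|), of the Hermitian form `x ↦ xᵀ A x^(q)`. -/
def hermSet (F : Type) [Field F] (q n : ℕ) (A : Matrix (Fin n) (Fin n) F) :
    Set (ProjPoint F n) :=
  {P | ∀ x ∈ P.1, ∑ i, ∑ j, x i * A i j * (x j) ^ q = 0}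

/-- A non-singular Hermitian variety of PG(n-1, q²). -/
def IsNonsingHermitian (F : Type) [Field F] (q n : ℕ)
    (V : Set (ProjPoint F n)) : Prop :=
  ∃ A : Matrix (Fin n) (Fin n) F, IsUnit A.det ∧
    Aᵀ = A.map (fun a => a ^ q) ∧ V = hermSet F q n A

/-- A singular Hermitian variety of PG(n-1, q²) whose singular space (the radical
of the Hermitian form) has projective dimension `d`. -/
def IsSingularHermitian (F : Type) [Field F] (q n d : ℕ)
    (S : Set (ProjPoint F n)) : Prop :=
  ∃ A : Matrix (Fin n) (Fin n) F,
    Aᵀ = A.map (fun a => a ^ q) ∧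
    finrank F (LinearMap.ker (Matrix.toLin' Aᵀ)) = d + 1 ∧
    S = hermSet F q n A

/-- A `d`-singular quasi-Hermitian variety of PG(r, q²). -/
def IsSingularQuasiHermitian (F : Type) [Field F] (q r d : ℕ)
    (S : Set (ProjPoint F (r + 1))) : Prop :=
  ∃ S₀ : Set (ProjPoint F (r + 1)), IsSingularHermitian F q (r + 1) d S₀ ∧
    S.ncard = S₀.ncard ∧
    ∀ H : Submodule F (Fin (r + 1) → F), finrank F H = r →
      ∃ H₀ : Submodule F (Fin (r + 1) → F), finrank F H₀ = r ∧
        secant F (r + 1) S H = secant F (r + 1) S₀ H₀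

/-- `U` is a classical unital (Hermitian curve) of the plane `π` of PG(n-1, q²):
in some coordinatization `e` of `π`, it is the zero set of a non-degenerate
Hermitian form on `F³`. -/
def IsClassicalUnital (F : Type) [Field F] (q n : ℕ)
    (π : Submodule F (Fin n → F)) (U : Set (ProjPoint F n)) : Prop :=
  ∃ e : (Fin 3 → F) →ₗ[F] (Fin n → F), LinearMap.ker e = ⊥ ∧ LinearMap.range e = π ∧
    ∃ A : Matrix (Fin 3) (Fin 3) F, IsUnit A.det ∧ Aᵀ = A.map (fun a => a ^ q) ∧
      U = {P | ∃ y : Fin 3 → F, y ≠ 0 ∧ P.1 = Submodule.span F {e y} ∧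
        ∑ i, ∑ j, y i * A i j * (y j) ^ q = 0}

/-!
Fix a line `ℓ` of the plane and a point `R ∈ ℓ` outside `V`, and choose affine coordinates `(y, x)`
in which the lines through `R` are the lines `y = const` together with the line at infinity, with
`ℓ` given by `y = 0`. Every codeword of `C_p` is a combination of hyperplanes, so the `k`-th power
sum over the points of `V` on the line `y` is a polynomial in `y` of degree at most `k`. The Hankel
determinant of these power sums of size `s = |ℓ ∩ V|` is thus a polynomial in `y` of degree at most
`s(s - 1)`, it is nonzero at `y = 0`, and at each `y` it vanishes to order at least `s - s_y`, where
`s_y` is the number of points of `V` on the line `y`. Summing over `y` gives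
`q²s < s(s - 1) + q³ + q² + 1`, which together with `s ≡ 1 (mod p)` leaves only short lines
(`s ≤ q + 1`) and long lines (`s ≥ q² - q - 1`).

Counting incidences in the plane then shows that there are exactly `q + 1` long lines and that they
are contained in `V`. A point of `V` lies on all of them or on exactly one, so a short line meets
`V` in `1` or in `q + 1` points.
-/

section PolynomialMatrices

open Polynomial Finset

variable {n : Type*} [Fintype n] [DecidableEq n]

theorem prod_dvd_det_of_dvd {R : Type*} [CommRing R] {M : Matrix n n R} {d : n → R}
    (hd : ∀ i j, d j ∣ M i j) : ∏ j, d j ∣ M.det := by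
  choose N hN using hd
  have hM : M = of fun i j => d j * of N i j := Matrix.ext hN
  exact hM ▸ ⟨_, det_mul_row d (of N)⟩

theorem natDegree_det_le_of_natDegree_le_add {R : Type*} [CommRing R] {M : Matrix n n R[X]}
    {a b : n → ℕ} (hM : ∀ i j, (M i j).natDegree ≤ a i + b j) :
    M.det.natDegree ≤ ∑ i, a i + ∑ j, b j := by
  rw [det_apply]
  refine natDegree_sum_le_of_forall_le _ _ fun σ _ => (natDegree_smul_le _ _).trans ?_
  calc (∏ j, M (σ j) j).natDegree
      ≤ ∑ j, (M (σ j) j).natDegree := natDegree_prod_le _ _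
    _ ≤ ∑ j, (a (σ j) + b j) := sum_le_sum fun j _ => hM (σ j) j
    _ = ∑ i, a i + ∑ j, b j := by rw [sum_add_distrib, Equiv.sum_comp σ a]

variable {K : Type*} [Field K]

theorem exists_mul_mul_eq_diagonal (A : Matrix n n K) :
    ∃ (U W : Matrix n n K) (D : n → K), U.det = 1 ∧ W.det = 1 ∧ U * A * W = diagonal D := by
  obtain ⟨L, L', D, h⟩ := Pivot.exists_list_transvec_mul_mul_list_transvec_eq_diagonal A
  exact ⟨_, _, D, TransvectionStruct.det_toMatrix_prod L,
    TransvectionStruct.det_toMatrix_prod L', h⟩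

theorem X_sub_C_pow_dvd_det (M : Matrix n n K[X]) (y : K) :
    (X - C y) ^ (Fintype.card n - (M.map (eval y)).rank) ∣ M.det := by
  classical
  obtain ⟨U, W, D, hU, hW, hD⟩ := exists_mul_mul_eq_diagonal (M.map (eval y))
  set N : Matrix n n K[X] := U.map C * M * W.map C
  have hdet : N.det = M.det := by
    have hC (B : Matrix n n K) : (B.map C).det = C B.det := (RingHom.map_det C B).symm
    simp [N, det_mul, hC, hU, hW]
  have heval : N.map (eval y) = diagonal D := by
    have hCy (B : Matrix n n K) : (B.map C).map (eval y) = B := by ext; simp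
    simp only [N, ← coe_evalRingHom, Matrix.map_mul]
    simp only [coe_evalRingHom, hCy, hD]
  have hdvd (i j : n) : (if D j = 0 then X - C y else 1) ∣ N i j := by
    split_ifs with hj
    · rw [dvd_iff_isRoot, IsRoot.def, ← Matrix.map_apply (f := eval y), heval, diagonal_apply]
      split_ifs with hij
      · rw [hij, hj]
      · rfl
    · exact one_dvd _
  have hrank : Fintype.card n - (M.map (eval y)).rank = #{j | D j = 0} := by
    have hr : (diagonal D).rank = (M.map (eval y)).rank := by
      rw [← hD, rank_mul_eq_left_of_isUnit_det _ _ (by simp [hW]),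
        rank_mul_eq_right_of_isUnit_det _ _ (by simp [hU])]
    rw [← hr, rank_diagonal, Fintype.card_subtype, ← card_univ,
      ← card_filter_add_card_filter_not (fun j => D j = 0), Nat.add_sub_cancel]
  rw [hrank, ← hdet, ← prod_const, prod_filter]
  exact prod_dvd_det_of_dvd hdvd

end PolynomialMatrices

section Hankel

open Polynomial Finset

/-- The `s × s` Hankel matrix of a sequence. -/
def hankel {R : Type*} (s : ℕ) (μ : ℕ → R) : Matrix (Fin s) (Fin s) R :=
  of fun i j => μ (i + j)

theorem hankel_sum_pow_eq_transpose_mul {R : Type*} [CommSemiring R] (s : ℕ) (A : Finset R) :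
    hankel s (fun k => ∑ x ∈ A, x ^ k) =
      (of fun (x : A) (i : Fin s) => (x : R) ^ (i : ℕ))ᵀ *
        of fun (x : A) (i : Fin s) => (x : R) ^ (i : ℕ) := by
  ext i j
  simp only [hankel, of_apply, mul_apply, transpose_apply, ← pow_add]
  exact (sum_coe_sort A fun x => x ^ (i + j : ℕ)).symm

variable {K : Type*} [Field K]

theorem rank_hankel_sum_pow_le (s : ℕ) (A : Finset K) :
    (hankel s fun k => ∑ x ∈ A, x ^ k).rank ≤ #A := by
  rw [hankel_sum_pow_eq_transpose_mul, ← Fintype.card_coe A]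
  exact (rank_mul_le_right _ _).trans (rank_le_card_height _)

theorem det_hankel_sum_pow_ne_zero (A : Finset K) :
    (hankel #A fun k => ∑ x ∈ A, x ^ k).det ≠ 0 := by
  let v (i : Fin #A) : K := A.equivFin.symm i
  have hv : Function.Injective v := Subtype.val_injective.comp A.equivFin.symm.injective
  have hfactor : (hankel #A fun k => ∑ x ∈ A, x ^ k) = (vandermonde v)ᵀ * vandermonde v := by
    ext i j
    simp only [hankel, of_apply, mul_apply, transpose_apply, vandermonde_apply, ← pow_add,
      ← sum_coe_sort A]
    exact (Equiv.sum_comp A.equivFin.symm fun x : A => (x : K) ^ (i + j : ℕ)).symm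
  rw [hfactor, det_mul, det_transpose]
  exact mul_self_ne_zero.mpr (det_vandermonde_ne_zero_iff.mpr hv)

theorem natDegree_det_hankel_le {P : ℕ → K[X]} (hP : ∀ k, (P k).natDegree ≤ k) (s : ℕ) :
    (hankel s P).det.natDegree ≤ s * (s - 1) := by
  have hentry (i j : Fin s) : (hankel s P i j).natDegree ≤ (i : ℕ) + (j : ℕ) := hP (i + j)
  refine (natDegree_det_le_of_natDegree_le_add hentry).trans_eq ?_
  rw [← mul_two, ← Finset.sum_range (fun i => i), sum_range_id_mul_two]

/-- The Hankel determinant of the first power sums is a nonzero polynomial that vanishes to order at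
least `#(A y₀) - #(A y)` at each `y ∈ Y`. -/
theorem sum_card_sub_card_le {A : K → Finset K} {Y : Finset K} {P : ℕ → K[X]}
    (hdeg : ∀ k, (P k).natDegree ≤ k) (heval : ∀ k, ∀ y ∈ Y, (P k).eval y = ∑ x ∈ A y, x ^ k)
    {y₀ : K} (hy₀ : y₀ ∈ Y) :
    ∑ y ∈ Y, (#(A y₀) - #(A y)) ≤ #(A y₀) * (#(A y₀) - 1) := by
  set s := #(A y₀)
  have hmap {y : K} (hy : y ∈ Y) :
      (hankel s P).map (eval y) = hankel s fun k => ∑ x ∈ A y, x ^ k := by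
    ext i j
    exact heval _ y hy
  have hdet : (hankel s P).det ≠ 0 := by
    intro h0
    apply det_hankel_sum_pow_ne_zero (A y₀)
    rw [← hmap hy₀, ← coe_evalRingHom, ← RingHom.mapMatrix_apply, ← RingHom.map_det, h0, map_zero]
  have hdvd : ∏ y ∈ Y, (X - C y) ^ (s - #(A y)) ∣ (hankel s P).det := by
    refine prod_dvd_of_coprime (fun a _ b _ hab => ?_) fun y hy => ?_
    · exact (isCoprime_X_sub_C_of_isUnit_sub (sub_ne_zero.mpr hab).isUnit).pow
    · refine (pow_dvd_pow _ ?_).trans (X_sub_C_pow_dvd_det (hankel s P) y)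
      rw [hmap hy, Fintype.card_fin]
      exact Nat.sub_le_sub_left (rank_hankel_sum_pow_le s (A y)) s
  calc ∑ y ∈ Y, (s - #(A y))
      = (∏ y ∈ Y, (X - C y) ^ (s - #(A y))).natDegree := by
        rw [natDegree_prod_of_monic Y _ fun y _ => (monic_X_sub_C y).pow (s - #(A y))]
        simp
    _ ≤ (hankel s P).det.natDegree := natDegree_le_of_dvd hdvd hdet
    _ ≤ s * (s - 1) := natDegree_det_hankel_le hdeg s

end Hankel

section ProjectivePlane

open Configuration Finset

theorem sum_card_le_card_biUnion_add_choose_two {ι α : Type*} [DecidableEq α]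
    {f : ι → Finset α} (hf : ∀ i j, i ≠ j → #(f i ∩ f j) ≤ 1) (T : Finset ι) :
    ∑ i ∈ T, #(f i) ≤ #(T.biUnion f) + (#T).choose 2 := by
  classical
  induction T using Finset.induction_on with
  | empty => simp
  | insert i T hi ih =>
    have hinter : #(f i ∩ T.biUnion f) ≤ #T := by
      rw [inter_biUnion]
      refine (card_biUnion_le_card_mul _ _ 1 fun j hj => hf i j ?_).trans_eq (mul_one _)
      rintro rfl
      exact hi hj
    have hunion := card_union_add_card_inter (f i) (T.biUnion f)
    rw [sum_insert hi, biUnion_insert, card_insert_of_notMem hi,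
      Nat.choose_succ_succ' _ 1, Nat.choose_one_right, one_add_one_eq_two]
    omega

open scoped Classical in
/-- The number of points of `S` on the line `l` of a point-line geometry. -/
noncomputable def lineCard {P L : Type*} [Membership P L] (S : Finset P) (l : L) : ℕ :=
  #{a ∈ S | a ∈ l}

variable {P L : Type*} [Membership P L] {S : Finset P}

open scoped Classical in
theorem sum_lineCard_eq_sum_card (T : Finset L) (S : Finset P) :
    ∑ l ∈ T, lineCard S l = ∑ a ∈ S, #{l ∈ T | a ∈ l} :=
  (sum_card_bipartiteAbove_eq_sum_card_bipartiteBelow (fun a l => a ∈ l)).symm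

theorem sum_lineCard_le [Nondegenerate P L] (T : Finset L) :
    ∑ l ∈ T, lineCard S l ≤ #S + (#T).choose 2 := by
  classical
  have hinter (l m : L) (hlm : l ≠ m) : #({a ∈ S | a ∈ l} ∩ {a ∈ S | a ∈ m}) ≤ 1 := by
    simp only [card_le_one, mem_inter, mem_filter]
    rintro a ⟨⟨-, hal⟩, -, ham⟩ b ⟨⟨-, hbl⟩, -, hbm⟩
    exact (Nondegenerate.eq_or_eq hal hbl ham hbm).resolve_right hlm
  refine (sum_card_le_card_biUnion_add_choose_two hinter T).trans ?_
  gcongr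
  exact biUnion_subset.mpr fun l _ => filter_subset _ S

variable [ProjectivePlane P L] [Finite P]

theorem lineCard_le [Finite L] (l : L) : lineCard S l ≤ ProjectivePlane.order P L + 1 := by
  classical
  have := Fintype.ofFinite P
  rw [← ProjectivePlane.pointCount_eq P l, pointCount, Nat.card_eq_fintype_card,
    Fintype.card_subtype]
  exact card_le_card (filter_subset_filter _ (subset_univ S))

theorem mem_of_lineCard_eq [Finite L] {l : L} (h : lineCard S l = ProjectivePlane.order P L + 1)
    {a : P} (ha : a ∈ l) : a ∈ S := by
  classical
  have := Fintype.ofFinite P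
  rw [← ProjectivePlane.pointCount_eq P l, pointCount, Nat.card_eq_fintype_card,
    Fintype.card_subtype] at h
  have heq := eq_of_subset_of_card_le (filter_subset_filter (· ∈ l) (subset_univ S)) h.ge
  exact (mem_filter.mp (heq.symm ▸ mem_filter.mpr ⟨mem_univ a, ha⟩)).1

open scoped Classical in
theorem sum_card_filter_mem_eq_card [Finite L] {T : Finset L} {l : L} (hl : l ∉ T)
    (hT : ∀ g ∈ T, lineCard S g = ProjectivePlane.order P L + 1) :
    ∑ a ∈ S with a ∈ l, #{g ∈ T | a ∈ g} = #T := by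
  rw [← sum_lineCard_eq_sum_card, card_eq_sum_ones]
  refine sum_congr rfl fun g hg => card_eq_one.mpr ?_
  have hgl : g ≠ l := fun h => hl (h ▸ hg)
  obtain ⟨a, ⟨hag, hal⟩, huniq⟩ := HasPoints.existsUnique_point P L g l hgl
  refine ⟨a, ext fun b => ?_⟩
  simp only [mem_filter, mem_singleton]
  constructor
  · rintro ⟨⟨-, hbl⟩, hbg⟩
    exact huniq b ⟨hbg, hbl⟩
  · rintro rfl
    exact ⟨⟨mem_of_lineCard_eq (hT g hg) hag, hal⟩, hag⟩

variable [Fintype L]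

open scoped Classical in
theorem card_lines_through (a : P) : #{l : L | a ∈ l} = ProjectivePlane.order P L + 1 := by
  rw [← ProjectivePlane.lineCount_eq L a, lineCount, Nat.card_eq_fintype_card,
    Fintype.card_subtype]

open scoped Classical in
theorem sum_lineCard_through {a : P} (ha : a ∈ S) :
    ∑ l : L with a ∈ l, lineCard S l = #S + ProjectivePlane.order P L := by
  have hjoin {b : P} (hb : b ∈ S.erase a) : #{l ∈ ({l | a ∈ l} : Finset L) | b ∈ l} = 1 := by
    obtain ⟨l, hl, huniq⟩ := HasLines.existsUnique_line P L a b (ne_of_mem_erase hb).symm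
    rw [filter_filter, card_eq_one]
    exact ⟨l, by ext m; simpa using ⟨huniq m, fun h => h ▸ hl⟩⟩
  have hself : #{l ∈ ({l | a ∈ l} : Finset L) | a ∈ l} = ProjectivePlane.order P L + 1 := by
    rw [filter_filter, ← card_lines_through a]
    simp only [and_self]
  rw [sum_lineCard_eq_sum_card, ← add_sum_erase _ _ ha, sum_congr rfl fun b => hjoin, hself,
    sum_const, smul_eq_mul, mul_one, card_erase_of_mem ha]
  have := card_pos.mpr ⟨a, ha⟩
  omega

end ProjectivePlane

section ShortLong

open Configuration Finset

/-- `S` is a set of `q³ + q² + 1` points of a projective plane of order `q²` each of whose lines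
is either short, with at most `q + 1` points of `S`, or long, with at least `q² - q - 1` points of
`S` (written without subtraction). -/
structure IsShortLongSet {P : Type*} (L : Type*) [Membership P L] [ProjectivePlane P L]
    (q : ℕ) (S : Finset P) : Prop where
  order_eq : ProjectivePlane.order P L = q ^ 2
  five_le : 5 ≤ q
  card_eq : #S = q ^ 3 + q ^ 2 + 1
  short_or_long : ∀ l : L, lineCard S l ≤ q + 1 ∨ q ^ 2 ≤ lineCard S l + q + 1

/-- The lines that meet `S` in more than `q + 1` points. -/
noncomputable def longLines {P : Type*} (L : Type*) [Membership P L] [Fintype L]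
    (q : ℕ) (S : Finset P) : Finset L :=
  {l | q + 1 < lineCard S l}

namespace IsShortLongSet

variable {P L : Type*} [Membership P L] [ProjectivePlane P L] [Fintype L]
  {q : ℕ} {S : Finset P} {a : P} {g l : L}

theorem le_of_mem_longLines (hS : IsShortLongSet L q S) (hg : g ∈ longLines L q S) :
    q ^ 2 ≤ lineCard S g + q + 1 :=
  (hS.short_or_long g).resolve_left (mem_filter.mp hg).2.not_ge

theorem card_longLines_le_two_mul (hS : IsShortLongSet L q S) : #(longLines L q S) ≤ 2 * q := by
  by_contra! hmany
  obtain ⟨T, hT, hTcard⟩ := exists_subset_card_eq (Nat.succ_le_of_lt hmany)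
  rw [Nat.succ_eq_add_one] at hTcard
  have hlong : ∑ _l ∈ T, q ^ 2 ≤ ∑ l ∈ T, (lineCard S l + (q + 1)) :=
    sum_le_sum fun l hl => hS.le_of_mem_longLines (hT hl)
  have hsum := sum_lineCard_le (S := S) T
  have hchoose := Nat.add_one_mul_choose_eq (2 * q) 1
  rw [sum_add_distrib, sum_const, sum_const, smul_eq_mul, smul_eq_mul, hTcard] at hlong
  rw [hTcard, hS.card_eq] at hsum
  rw [Nat.choose_one_right] at hchoose
  nlinarith [hS.five_le]

variable [Finite P]

theorem exists_ne_mem_longLines (hS : IsShortLongSet L q S) (ha : a ∈ S) (hag : a ∈ g)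
    (hg : lineCard S g ≤ q ^ 2) : ∃ g' ∈ longLines L q S, g' ≠ g ∧ a ∈ g' := by
  classical
  by_contra! hno
  have hshort {l : L} (hl : l ∈ ({l | a ∈ l} : Finset L).erase g) : lineCard S l ≤ q + 1 := by
    obtain ⟨hlg, hal⟩ := mem_erase.mp hl
    by_contra! hlong
    exact hno l (mem_filter.mpr ⟨mem_univ l, hlong⟩) hlg (mem_filter.mp hal).2
  have hga : g ∈ ({l | a ∈ l} : Finset L) := mem_filter.mpr ⟨mem_univ g, hag⟩
  have hsum := sum_lineCard_through (L := L) ha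
  rw [← add_sum_erase _ _ hga, hS.card_eq, hS.order_eq] at hsum
  have hle := sum_le_card_nsmul _ _ _ fun l => hshort (l := l)
  rw [card_erase_of_mem hga, card_lines_through, hS.order_eq, Nat.add_sub_cancel,
    smul_eq_mul] at hle
  nlinarith [hS.five_le]

theorem exists_mem_longLines (hS : IsShortLongSet L q S) (ha : a ∈ S) :
    ∃ g ∈ longLines L q S, a ∈ g := by
  obtain ⟨l, hal⟩ : ∃ l : L, a ∈ l := by
    have := (ProjectivePlane.two_lt_lineCount L a).pos
    exact nonempty_subtype.mp (Nat.card_pos_iff.mp this).1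
  by_cases hl : lineCard S l ≤ q ^ 2
  · obtain ⟨g, hg, -, hag⟩ := hS.exists_ne_mem_longLines ha hal hl
    exact ⟨g, hg, hag⟩
  · exact ⟨l, mem_filter.mpr ⟨mem_univ l, by nlinarith [hS.five_le]⟩, hal⟩

theorem lineCard_of_mem_longLines (hS : IsShortLongSet L q S) (hg : g ∈ longLines L q S) :
    lineCard S g = q ^ 2 + 1 := by
  classical
  by_contra hne
  have hle : lineCard S g ≤ q ^ 2 := by
    have := lineCard_le (S := S) g
    rw [hS.order_eq] at this
    omega
  have : Nonempty L := ⟨g⟩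
  choose! f hf using fun a (ha : a ∈ S ∧ a ∈ g) => hS.exists_ne_mem_longLines ha.1 ha.2 hle
  have hcard : lineCard S g ≤ #(longLines L q S) := by
    refine card_le_card_of_injOn f (fun a ha => (hf a (mem_filter.mp ha)).1) ?_
    intro a ha b hb hab
    obtain ⟨⟨-, hag⟩, ⟨-, hbg⟩⟩ := And.intro (mem_filter.mp ha) (mem_filter.mp hb)
    obtain ⟨-, hne, haf⟩ := hf a (mem_filter.mp ha)
    obtain ⟨-, -, hbf⟩ := hf b (mem_filter.mp hb)
    exact (Nondegenerate.eq_or_eq haf (hab ▸ hbf) hag hbg).resolve_right hne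
  nlinarith [hS.card_longLines_le_two_mul, hS.le_of_mem_longLines hg, hS.five_le]

theorem card_longLines (hS : IsShortLongSet L q S) : #(longLines L q S) = q + 1 := by
  classical
  have hq := hS.five_le
  apply le_antisymm
  · by_contra! hmany
    obtain ⟨T, hT, hTcard⟩ := exists_subset_card_eq (Nat.succ_le_of_lt hmany)
    rw [Nat.succ_eq_add_one] at hTcard
    have hsum := sum_lineCard_le (S := S) T
    have hchoose := Nat.add_one_mul_choose_eq (q + 1) 1
    rw [sum_congr rfl fun l hl => hS.lineCard_of_mem_longLines (hT hl), sum_const, smul_eq_mul,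
      hTcard, hS.card_eq] at hsum
    rw [Nat.choose_one_right] at hchoose
    nlinarith
  · have hcover : S ⊆ (longLines L q S).biUnion fun g => {a ∈ S | a ∈ g} := fun a ha => by
      obtain ⟨g, hg, hag⟩ := hS.exists_mem_longLines ha
      exact mem_biUnion.mpr ⟨g, hg, mem_filter.mpr ⟨ha, hag⟩⟩
    have hcard := (card_le_card hcover).trans (card_biUnion_le_card_mul _ _ _ fun g hg =>
      (hS.lineCard_of_mem_longLines hg).le)
    rw [hS.card_eq] at hcard
    by_contra! hfew
    nlinarith

open scoped Classical in
theorem sum_card_longLines_of_mem (hS : IsShortLongSet L q S) (hg : g ∈ longLines L q S) :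
    ∑ a ∈ S with a ∈ g, #{g' ∈ longLines L q S | a ∈ g'} = q ^ 2 + 1 + q := by
  have hsplit {a : P} (ha : a ∈ ({a ∈ S | a ∈ g} : Finset P)) :
      #{g' ∈ longLines L q S | a ∈ g'} = 1 + #{g' ∈ (longLines L q S).erase g | a ∈ g'} := by
    rw [← insert_erase hg, filter_insert, if_pos (mem_filter.mp ha).2, erase_insert_eq_erase,
      erase_idem, card_insert_of_notMem (by simp), add_comm]
  have hothers := sum_card_filter_mem_eq_card (S := S) (notMem_erase g (longLines L q S))
    fun g' hg' => by rw [hS.order_eq, hS.lineCard_of_mem_longLines (mem_of_mem_erase hg')]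
  rw [card_erase_of_mem hg, hS.card_longLines, Nat.add_sub_cancel] at hothers
  rw [sum_congr rfl fun a => hsplit, sum_add_distrib, ← card_eq_sum_ones, hothers,
    ← hS.lineCard_of_mem_longLines hg, lineCard]

open scoped Classical in
theorem card_longLines_through_eq_one (hS : IsShortLongSet L q S) (hg : g ∈ longLines L q S)
    (ha : a ∈ S) (hag : a ∉ g) : #{g' ∈ longLines L q S | a ∈ g'} = 1 := by
  have htotal := sum_lineCard_eq_sum_card (longLines L q S) S
  rw [sum_congr rfl fun g' => hS.lineCard_of_mem_longLines, sum_const, hS.card_longLines,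
    smul_eq_mul, ← sum_filter_add_sum_filter_not S (· ∈ g), hS.sum_card_longLines_of_mem hg]
    at htotal
  have hcard : q ^ 2 + 1 + #{a ∈ S | a ∉ g} = q ^ 3 + q ^ 2 + 1 := by
    rw [← hS.card_eq, ← hS.lineCard_of_mem_longLines hg]
    exact card_filter_add_card_filter_not _
  have hpos (a : P) (ha : a ∈ ({a ∈ S | a ∉ g} : Finset P)) :
      1 ≤ #{g' ∈ longLines L q S | a ∈ g'} := by
    obtain ⟨g', hg', hag'⟩ := hS.exists_mem_longLines (mem_filter.mp ha).1
    exact card_pos.mpr ⟨g', mem_filter.mpr ⟨hg', hag'⟩⟩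
  have hsum : ∑ _a ∈ S with _a ∉ g, 1 = ∑ a ∈ S with a ∉ g, #{g' ∈ longLines L q S | a ∈ g'} := by
    rw [← card_eq_sum_ones]
    linarith
  exact ((sum_eq_sum_iff_of_le hpos).mp hsum a (mem_filter.mpr ⟨ha, hag⟩)).symm

end IsShortLongSet

theorem IsShortLongSet.lineCard_eq {P L : Type*} [Membership P L] [ProjectivePlane P L] [Finite P]
    [Finite L] {q : ℕ} {S : Finset P} (hS : IsShortLongSet L q S) (l : L) :
    lineCard S l = 1 ∨ lineCard S l = q + 1 ∨ lineCard S l = q ^ 2 + 1 := by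
  classical
  have := Fintype.ofFinite L
  by_cases hl : l ∈ longLines L q S
  · exact .inr (.inr (hS.lineCard_of_mem_longLines hl))
  by_cases hvertex : ∃ a ∈ S, a ∈ l ∧ ∀ g ∈ longLines L q S, a ∈ g
  · obtain ⟨a, ha, hal, hag⟩ := hvertex
    refine .inl (card_eq_one.mpr ⟨a, ext fun b => ?_⟩)
    simp only [mem_filter, mem_singleton]
    constructor
    · rintro ⟨hb, hbl⟩
      obtain ⟨g, hg, hbg⟩ := hS.exists_mem_longLines hb
      have hgl : l ≠ g := fun h => hl (h ▸ hg)
      exact (Nondegenerate.eq_or_eq hbl hal hbg (hag g hg)).resolve_right hgl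
    · rintro rfl
      exact ⟨ha, hal⟩
  · push Not at hvertex
    have hone (a : P) (ha : a ∈ ({a ∈ S | a ∈ l} : Finset P)) :
        #{g ∈ longLines L q S | a ∈ g} = 1 := by
      obtain ⟨haS, hal⟩ := mem_filter.mp ha
      obtain ⟨g, hg, hag⟩ := hvertex a haS hal
      exact hS.card_longLines_through_eq_one hg haS hag
    have hcount := sum_card_filter_mem_eq_card (S := S) hl
      fun g hg => by rw [hS.order_eq, hS.lineCard_of_mem_longLines hg]
    rw [sum_congr rfl hone, ← card_eq_sum_ones, hS.card_longLines] at hcount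
    exact .inr (.inl hcount)

end ShortLong

section ProjectiveSpace

open Finset
open scoped LinearAlgebra.Projectivization

variable {F : Type} [Field F] {n : ℕ}

instance [Finite F] : Finite (ProjPoint F n) :=
  Finite.of_equiv _ (Projectivization.equivSubmodule F (Fin n → F))

variable {E : Type*} [AddCommGroup E] [Module F E] {e : E →ₗ[F] Fin n → F}
  {he : Function.Injective e}

/-- The map on projective points induced by an injective linear map into `F ^ n`. -/
noncomputable def imagePoint (e : E →ₗ[F] Fin n → F) (he : Function.Injective e) (v : ℙ F E) :
    ProjPoint F n :=
  Projectivization.equivSubmodule F (Fin n → F) (Projectivization.map e he v)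

theorem imagePoint_injective : Function.Injective (imagePoint e he) :=
  (Projectivization.equivSubmodule F (Fin n → F)).injective.comp
    (Projectivization.map_injective e he)

theorem imagePoint_mk_val {v : E} (hv : v ≠ 0) :
    (imagePoint e he (.mk F v hv)).1 = Submodule.span F {e v} :=
  rfl

theorem imagePoint_mk_mem_pointsIn {v : E} (hv : v ≠ 0) {W : Submodule F (Fin n → F)} :
    imagePoint e he (.mk F v hv) ∈ pointsIn F n W ↔ e v ∈ W :=
  Submodule.span_singleton_le_iff_mem (e v) W

theorem range_imagePoint : Set.range (imagePoint e he) = pointsIn F n (LinearMap.range e) := by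
  ext P
  constructor
  · rintro ⟨v, rfl⟩
    induction v with | h v hv =>
    exact (imagePoint_mk_mem_pointsIn hv).mpr ⟨v, rfl⟩
  · intro hP
    obtain ⟨w, rfl⟩ := (Projectivization.equivSubmodule F (Fin n → F)).surjective P
    induction w with | h w hw =>
    obtain ⟨v, rfl⟩ : w ∈ LinearMap.range e := (Submodule.span_singleton_le_iff_mem w _).mp hP
    exact ⟨.mk F v (ne_of_apply_ne e (by rwa [map_zero])), rfl⟩

theorem ncard_pointsIn [Finite F] (W : Submodule F (Fin n → F)) :
    (pointsIn F n W).ncard = ∑ i ∈ range (finrank F W), Nat.card F ^ i := by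
  rw [← Projectivization.card_of_finrank F W rfl, ← W.range_subtype,
    ← range_imagePoint (he := W.injective_subtype),
    Set.ncard_range_of_injective imagePoint_injective, W.range_subtype]

theorem cast_ncard_pointsIn_eq_one [Finite F] {p : ℕ} [CharP F p] {W : Submodule F (Fin n → F)}
    (hW : 0 < finrank F W) : ((pointsIn F n W).ncard : ZMod p) = 1 := by
  obtain ⟨d, hd⟩ := Nat.exists_eq_add_of_lt hW
  have := Fintype.ofFinite F
  have hcard : (Fintype.card F : ZMod p) = 0 := by
    rw [ZMod.natCast_eq_zero_iff, ← CharP.cast_eq_zero_iff F p, FiniteField.cast_card_eq_zero]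
  simp [ncard_pointsIn, hd, sum_range_succ', hcard]

theorem secant_pointsIn (H W : Submodule F (Fin n → F)) :
    secant F n (pointsIn F n H) W = (pointsIn F n (H ⊓ W)).ncard := by
  rw [secant]
  congr 1
  ext P
  exact (le_inf_iff (a := H) (b := W) (c := P.1)).symm

/-- The sum of the values of a function over the points of a subspace. -/
noncomputable def pointSum [Finite F] (R : Type*) [Semiring R] (W : Submodule F (Fin n → F)) :
    (ProjPoint F n → R) →ₗ[R] R :=
  ∑ P ∈ (pointsIn F n W).toFinite.toFinset, LinearMap.proj P

theorem pointSum_charVec [Finite F] {p : ℕ} (V : Set (ProjPoint F n))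
    (W : Submodule F (Fin n → F)) :
    pointSum (ZMod p) W (charVec F p n V) = secant F n V W := by
  classical
  simp only [pointSum, LinearMap.sum_apply, LinearMap.proj_apply, charVec, Set.indicator_apply,
    Pi.one_apply, sum_boole, secant]
  rw [← Set.ncard_coe_finset]
  congr 2
  ext P
  simp [and_comm]

theorem secant_cast_eq_secant_cast [Finite F] {p : ℕ} [CharP F p] {V : Set (ProjPoint F n)}
    (hV : charVec F p n V ∈ hypCode F p n) {W W' : Submodule F (Fin n → F)}
    (hW : 2 ≤ finrank F W) (hW' : 2 ≤ finrank F W') :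
    (secant F n V W : ZMod p) = secant F n V W' := by
  have hyperplane {H W : Submodule F (Fin n → F)} (hH : finrank F H = n - 1)
      (hW : 2 ≤ finrank F W) : (secant F n (pointsIn F n H) W : ZMod p) = 1 := by
    rw [secant_pointsIn]
    apply cast_ncard_pointsIn_eq_one
    have hdim := Submodule.finrank_sup_add_finrank_inf_eq H W
    have hle := (H ⊔ W).finrank_le.trans_eq (finrank_fin_fun F)
    omega
  rw [← pointSum_charVec, ← pointSum_charVec]
  refine LinearMap.eqOn_span ?_ hV
  rintro _ ⟨H, hH, rfl⟩
  rw [pointSum_charVec, pointSum_charVec, hyperplane hH hW, hyperplane hH hW']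

end ProjectiveSpace

section PlaneCoordinates

open Configuration Finset
open scoped LinearAlgebra.Projectivization

variable {F : Type} [Field F]

theorem exists_ker_eq_of_finrank_add_one_eq {V : Type*} [AddCommGroup V] [Module F V]
    [FiniteDimensional F V] {H : Submodule F V} (hH : finrank F H + 1 = finrank F V) :
    ∃ φ : Dual F V, φ ≠ 0 ∧ LinearMap.ker φ = H := by
  have hlt : H < ⊤ := Submodule.lt_top_of_finrank_lt_finrank (by omega)
  obtain ⟨φ, hφ, hle⟩ := H.exists_le_ker_of_lt_top hlt
  refine ⟨φ, hφ, (Submodule.eq_of_le_of_finrank_eq hle ?_).symm⟩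
  have := Dual.finrank_ker_add_one_of_ne_zero hφ
  omega

/-- The two-dimensional subspace of `F ^ 3` underlying the line with homogeneous line coordinates
`w`; in `Configuration.ofField` points and lines are both elements of `ℙ F (Fin 3 → F)`. -/
noncomputable def lineSubmodule (w : ℙ F (Fin 3 → F)) : Submodule F (Fin 3 → F) :=
  LinearMap.ker (dotProductEquiv F (Fin 3) w.rep)

theorem mk_mem_iff_mem_lineSubmodule {v : Fin 3 → F} (hv : v ≠ 0) {w : ℙ F (Fin 3 → F)} :
    Projectivization.mk F v hv ∈ w ↔ v ∈ lineSubmodule w := by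
  conv_lhs => rw [← w.mk_rep]
  rw [ofField.mem_iff, Projectivization.orthogonal_mk, dotProduct_comm]
  rfl

theorem finrank_lineSubmodule (w : ℙ F (Fin 3 → F)) : finrank F (lineSubmodule w) = 2 := by
  have hw : dotProductEquiv F (Fin 3) w.rep ≠ 0 :=
    (LinearEquiv.map_ne_zero_iff _).mpr w.rep_nonzero
  have := Dual.finrank_ker_add_one_of_ne_zero hw
  rw [finrank_fin_fun] at this
  exact Nat.succ_injective this

theorem exists_lineSubmodule_eq {U : Submodule F (Fin 3 → F)} (hU : finrank F U = 2) :
    ∃ w, lineSubmodule w = U := by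
  obtain ⟨φ, hφ, rfl⟩ := exists_ker_eq_of_finrank_add_one_eq (H := U) (by simp [hU])
  obtain ⟨u, rfl⟩ := (dotProductEquiv F (Fin 3)).surjective φ
  have hu : u ≠ 0 := (LinearEquiv.map_ne_zero_iff _).mp hφ
  refine ⟨.mk F u hu, Submodule.ext fun v => ?_⟩
  by_cases hv : v = 0
  · simp [hv]
  rw [← mk_mem_iff_mem_lineSubmodule hv, ofField.mem_iff, Projectivization.orthogonal_mk,
    dotProduct_comm]
  rfl

theorem order_ofField [Finite F] [DecidableEq F] :
    ProjectivePlane.order (ℙ F (Fin 3 → F)) (ℙ F (Fin 3 → F)) = Nat.card F := by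
  have := Fintype.ofFinite (ℙ F (Fin 3 → F))
  have hpoints := ProjectivePlane.card_points (ℙ F (Fin 3 → F)) (ℙ F (Fin 3 → F))
  have hcard := Projectivization.card_of_finrank F (Fin 3 → F) (finrank_fin_fun F)
  rw [Nat.card_eq_fintype_card, hpoints] at hcard
  simp only [sum_range_succ, range_zero, sum_empty] at hcard
  nlinarith

variable {n : ℕ} {E : Type*} [AddCommGroup E] [Module F E] [Finite E]

/-- The points of `V` in the image of `e`, in the coordinates given by `e`. -/
noncomputable def coordinateSet (e : E →ₗ[F] Fin n → F) (he : Function.Injective e)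
    (V : Set (ProjPoint F n)) : Finset (ℙ F E) :=
  (Set.toFinite (imagePoint e he ⁻¹' V)).toFinset

variable {V : Set (ProjPoint F n)}

theorem mem_coordinateSet {e : E →ₗ[F] Fin n → F} {he : Function.Injective e} {v : ℙ F E} :
    v ∈ coordinateSet e he V ↔ imagePoint e he v ∈ V := by
  simp [coordinateSet]

open scoped Classical in
theorem card_filter_coordinateSet (e : E →ₗ[F] Fin n → F) (he : Function.Injective e)
    (W : Submodule F E) :
    #{v ∈ coordinateSet e he V | v.submodule ≤ W} = secant F n V (W.map e) := by
  have himage : imagePoint e he '' {v | imagePoint e he v ∈ V ∧ v.submodule ≤ W} =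
      V ∩ pointsIn F n (W.map e) := by
    ext P
    constructor
    · rintro ⟨v, ⟨hvV, hvW⟩, rfl⟩
      refine ⟨hvV, ?_⟩
      induction v with | h v hv =>
      rw [imagePoint_mk_mem_pointsIn]
      exact Submodule.mem_map_of_mem ((Submodule.span_singleton_le_iff_mem v W).mp hvW)
    · rintro ⟨hPV, hPW⟩
      obtain ⟨v, rfl⟩ : P ∈ Set.range (imagePoint e he) := by
        rw [range_imagePoint]
        exact le_trans hPW LinearMap.map_le_range
      refine ⟨v, ⟨hPV, ?_⟩, rfl⟩
      induction v with | h v hv =>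
      obtain ⟨u, hu, huv⟩ := (imagePoint_mk_mem_pointsIn hv).mp hPW
      exact (Submodule.span_singleton_le_iff_mem v W).mpr (he huv ▸ hu)
  rw [secant, ← himage, Set.ncard_image_of_injective _ imagePoint_injective,
    ← Set.ncard_coe_finset]
  simp [mem_coordinateSet]

theorem card_coordinateSet (e : E →ₗ[F] Fin n → F) (he : Function.Injective e) :
    #(coordinateSet e he V) = secant F n V (LinearMap.range e) := by
  classical
  rw [← Submodule.map_top, ← card_filter_coordinateSet e he, filter_true_of_mem]
  exact fun v _ => le_top

theorem lineCard_coordinateSet [Finite F] (e : (Fin 3 → F) →ₗ[F] Fin n → F)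
    (he : Function.Injective e) (w : ℙ F (Fin 3 → F)) :
    lineCard (coordinateSet e he V) w = secant F n V ((lineSubmodule w).map e) := by
  classical
  rw [← card_filter_coordinateSet e he, lineCard]
  congr! 2 with v
  induction v with | h v hv =>
  rw [mk_mem_iff_mem_lineSubmodule]
  exact (Submodule.span_singleton_le_iff_mem v _).symm

end PlaneCoordinates

section AffineChart

open Finset
open scoped LinearAlgebra.Projectivization

variable {F : Type} [Field F]

theorem vecCons_one_ne_zero (y x : F) : ![y, 1, x] ≠ 0 :=
  fun h => one_ne_zero (congr_fun h 1)

/-- The point with affine coordinates `(y, x)` in the complement of the line `v 1 = 0`. -/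
def affinePoint (z : F × F) : ℙ F (Fin 3 → F) :=
  .mk F ![z.1, 1, z.2] (vecCons_one_ne_zero z.1 z.2)

theorem affinePoint_div_eq_mk {v : Fin 3 → F} (hv : v ≠ 0) (hv1 : v 1 ≠ 0) :
    affinePoint (v 0 / v 1, v 2 / v 1) = .mk F v hv := by
  rw [affinePoint, Projectivization.mk_eq_mk_iff']
  refine ⟨(v 1)⁻¹, funext fun i => ?_⟩
  fin_cases i <;> simp [hv1, div_eq_inv_mul]

theorem affinePoint_injective : Function.Injective (affinePoint (F := F)) := by
  rintro ⟨y, x⟩ ⟨y', x'⟩ h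
  obtain ⟨a, ha⟩ := (Projectivization.mk_eq_mk_iff' F _ _ _ _).mp h
  obtain rfl : a = 1 := by simpa using congr_fun ha 1
  rw [one_smul] at ha
  exact Prod.ext (congr_fun ha 0).symm (congr_fun ha 2).symm

theorem mk_submodule_le_ker_proj {v : Fin 3 → F} (hv : v ≠ 0) (i : Fin 3) :
    (Projectivization.mk F v hv).submodule ≤ LinearMap.ker (LinearMap.proj i) ↔ v i = 0 :=
  Submodule.span_singleton_le_iff_mem v _

variable (F) in
/-- The point at infinity common to the affine lines of constant first coordinate. -/
def verticalPoint : ℙ F (Fin 3 → F) :=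
  .mk F ![0, 0, 1] fun h => one_ne_zero (congr_fun h 2)

variable [Fintype F] (S : Finset (ℙ F (Fin 3 → F)))

open scoped Classical in
/-- The second affine coordinates of the points of `S` whose first affine coordinate is `y`. -/
noncomputable def affineFiber (y : F) : Finset F :=
  {x | affinePoint (y, x) ∈ S}

variable {S}

open scoped Classical in
theorem sum_card_affineFiber_add :
    ∑ y, #(affineFiber S y) + #{v ∈ S | v.submodule ≤ LinearMap.ker (LinearMap.proj 1)} = #S := by
  rw [← card_filter_add_card_filter_not (s := S)
    fun v => v.submodule ≤ LinearMap.ker (LinearMap.proj 1), add_comm]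
  congr 1
  rw [← card_sigma]
  refine card_bij (fun z _ => affinePoint (z.1, z.2)) ?_ ?_ ?_
  · rintro ⟨y, x⟩ hz
    have hz : affinePoint (y, x) ∈ S := by simpa [affineFiber] using hz
    rw [mem_filter, affinePoint, mk_submodule_le_ker_proj]
    exact ⟨hz, one_ne_zero⟩
  · rintro ⟨y, x⟩ _ ⟨y', x'⟩ _ h
    obtain ⟨rfl, rfl⟩ := Prod.ext_iff.mp (affinePoint_injective h)
    rfl
  · intro v hv
    obtain ⟨hvS, hv1⟩ := mem_filter.mp hv
    induction v with | h v hv0 =>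
    rw [mk_submodule_le_ker_proj] at hv1
    have hv := affinePoint_div_eq_mk hv0 hv1
    exact ⟨⟨v 0 / v 1, v 2 / v 1⟩, by simpa [affineFiber, hv] using hvS, hv⟩

open scoped Classical in
theorem card_affineFiber_zero (hS : verticalPoint F ∉ S) :
    #(affineFiber S 0) = #{v ∈ S | v.submodule ≤ LinearMap.ker (LinearMap.proj 0)} := by
  refine card_bij (fun x _ => affinePoint (0, x)) ?_ ?_ ?_
  · intro x hx
    have hx : affinePoint (0, x) ∈ S := by simpa [affineFiber] using hx
    rw [mem_filter, affinePoint, mk_submodule_le_ker_proj]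
    exact ⟨hx, rfl⟩
  · exact fun x _ x' _ h => (Prod.ext_iff.mp (affinePoint_injective h)).2
  · intro v hv
    obtain ⟨hvS, hv0⟩ := mem_filter.mp hv
    induction v with | h v hne =>
    rw [mk_submodule_le_ker_proj] at hv0
    have hv1 : v 1 ≠ 0 := by
      intro hv1
      have hv2 : v = v 2 • ![0, 0, 1] := by ext i; fin_cases i <;> simp [hv0, hv1]
      have hmk : Projectivization.mk F v hne = verticalPoint F :=
        (Projectivization.mk_eq_mk_iff' F _ _ _ _).mpr ⟨v 2, hv2.symm⟩
      exact hS (hmk ▸ hvS)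
    have hmk := affinePoint_div_eq_mk hne hv1
    rw [hv0, zero_div] at hmk
    exact ⟨v 2 / v 1, by simpa [affineFiber, hmk] using hvS, hmk⟩

end AffineChart

section PowerSums

open Polynomial Finset
open scoped LinearAlgebra.Projectivization

/-- The functions `R → R` that are given by polynomials of degree at most `k`. -/
noncomputable def polyFunctionsLE (R : Type*) [CommRing R] (k : ℕ) : Submodule R (R → R) :=
  (degreeLE R k).map (LinearMap.pi leval)

theorem mem_polyFunctionsLE {R : Type*} [CommRing R] {k : ℕ} {f : R → R} :
    f ∈ polyFunctionsLE R k ↔ ∃ P : R[X], P.natDegree ≤ k ∧ ∀ y, P.eval y = f y := by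
  simp [polyFunctionsLE, mem_degreeLE, natDegree_le_iff_degree_le, funext_iff]

variable {F : Type} [Field F] {n k : ℕ} {e : (Fin 3 → F) →ₗ[F] Fin n → F}
  {he : Function.Injective e}

theorem imagePoint_affinePoint_mem_pointsIn_ker (φ : Dual F (Fin n → F)) (y x : F) :
    imagePoint e he (affinePoint (y, x)) ∈ pointsIn F n (LinearMap.ker φ) ↔
      y * φ (e (Pi.single 0 1)) + φ (e (Pi.single 1 1)) + x * φ (e (Pi.single 2 1)) = 0 := by
  have hvec : ![y, 1, x] = y • Pi.single 0 1 + Pi.single 1 1 + x • Pi.single 2 1 := by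
    ext i
    fin_cases i <;> simp
  rw [affinePoint, imagePoint_mk_mem_pointsIn, LinearMap.mem_ker, hvec]
  simp only [map_add, map_smul, smul_eq_mul]

variable [Fintype F]

theorem polyFunctionsLE_eq_top (hk : Fintype.card F ≤ k + 1) :
    polyFunctionsLE F k = ⊤ := by
  classical
  refine Submodule.eq_top_iff'.mpr fun f => mem_polyFunctionsLE.mpr ?_
  have hinj : Set.InjOn (id : F → F) (univ : Finset F) := Set.injOn_id _
  refine ⟨Lagrange.interpolate univ id f, ?_, fun y =>
    Lagrange.eval_interpolate_at_node f hinj (mem_univ y)⟩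
  have hdeg := natDegree_le_of_degree_le (Lagrange.degree_interpolate_le f hinj)
  rw [card_univ] at hdeg
  omega

open scoped Classical in
/-- A line not through the vertical point is the graph of a linear function, contributing its
`k`-th power; a vertical line contributes `∑ x, x ^ k`, which vanishes for `k < |F| - 1`. -/
theorem sum_ite_pow_mem_polyFunctionsLE (hk : k < Fintype.card F - 1) (a b c : F) :
    (fun y => ∑ x, if y * a + b + x * c = 0 then x ^ k else 0) ∈ polyFunctionsLE F k := by
  rw [mem_polyFunctionsLE]
  by_cases hc : c = 0
  · refine ⟨0, by simp, fun y => ?_⟩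
    by_cases hy : y * a + b = 0 <;> simp [hc, hy, FiniteField.sum_pow_lt_card_sub_one F k hk]
  · refine ⟨(C (-a / c) * X + C (-b / c)) ^ k, ?_, fun y => ?_⟩
    · simpa using natDegree_pow_le_of_le k (natDegree_linear_le (a := -a / c) (b := -b / c))
    · have hroot (x : F) : y * a + b + x * c = 0 ↔ x = -a / c * y + -b / c := by
        field_simp
        grind
      simp [hroot]

variable {p : ℕ} [CharP F p]

theorem sum_cast_mul_pow_mem_polyFunctionsLE (hk : k < Fintype.card F - 1)
    {c : ProjPoint F n → ZMod p} (hc : c ∈ hypCode F p n) :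
    (fun y => ∑ x, (ZMod.castHom (dvd_refl p) F (c (imagePoint e he (affinePoint (y, x)))) * x ^ k))
      ∈ polyFunctionsLE F k := by
  classical
  induction hc using Submodule.span_induction with
  | mem c hc =>
    obtain ⟨H, hH, rfl⟩ := hc
    have hn : 3 ≤ n := by simpa using LinearMap.finrank_le_finrank_of_injective he
    obtain ⟨φ, -, rfl⟩ := exists_ker_eq_of_finrank_add_one_eq (H := H) (by simp; omega)
    convert sum_ite_pow_mem_polyFunctionsLE hk (φ (e (Pi.single 0 1)))
      (φ (e (Pi.single 1 1))) (φ (e (Pi.single 2 1))) using 4 with y x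
    simp only [charVec, Set.indicator_apply, imagePoint_affinePoint_mem_pointsIn_ker]
    split_ifs <;> simp
  | zero =>
    convert zero_mem (polyFunctionsLE F k) using 1
    ext y
    simp
  | add c c' _ _ hc hc' =>
    convert add_mem hc hc' using 1
    ext y
    simp [add_mul, sum_add_distrib]
  | smul r c _ hc =>
    convert Submodule.smul_mem _ (ZMod.castHom (dvd_refl p) F r) hc using 1
    ext y
    simp [mul_assoc, mul_sum]

theorem sum_affineFiber_pow_mem_polyFunctionsLE {V : Set (ProjPoint F n)}
    (hV : charVec F p n V ∈ hypCode F p n) (k : ℕ) :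
    (fun y => ∑ x ∈ affineFiber (coordinateSet e he V) y, x ^ k) ∈ polyFunctionsLE F k := by
  by_cases hk : k < Fintype.card F - 1
  · convert sum_cast_mul_pow_mem_polyFunctionsLE (e := e) (he := he) hk hV using 2 with y
    rw [affineFiber, sum_filter]
    refine sum_congr rfl fun x _ => ?_
    by_cases hx : imagePoint e he (affinePoint (y, x)) ∈ V <;>
      simp [mem_coordinateSet, charVec, hx]
  · rw [polyFunctionsLE_eq_top (by omega)]
    exact Submodule.mem_top

theorem card_mul_secant_add_secant_le {V : Set (ProjPoint F n)}
    (hV : charVec F p n V ∈ hypCode F p n) (e : (Fin 3 → F) →ₗ[F] Fin n → F)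
    (he : Function.Injective e) (hvert : imagePoint e he (verticalPoint F) ∉ V) {s : ℕ}
    (hs : secant F n V ((LinearMap.ker (LinearMap.proj 0)).map e) = s) :
    Fintype.card F * s + secant F n V ((LinearMap.ker (LinearMap.proj 1)).map e) ≤
      s * (s - 1) + secant F n V (LinearMap.range e) := by
  set S := coordinateSet e he V
  choose P hdeg heval using fun k =>
    mem_polyFunctionsLE.mp (sum_affineFiber_pow_mem_polyFunctionsLE (he := he) hV k)
  have hsum := sum_card_sub_card_le (A := affineFiber S) (Y := univ) hdeg
    (fun k y _ => heval k y) (mem_univ 0)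
  have hzero : #(affineFiber S 0) = s := by
    rw [card_affineFiber_zero (by rwa [mem_coordinateSet]), card_filter_coordinateSet, hs]
  have htotal := sum_card_affineFiber_add (S := S)
  rw [card_filter_coordinateSet, card_coordinateSet] at htotal
  have hle : Fintype.card F * s ≤ ∑ y, (s - #(affineFiber S y)) + ∑ y, #(affineFiber S y) := by
    rw [← sum_add_distrib, ← card_univ, ← smul_eq_mul]
    exact card_nsmul_le_sum _ _ _ fun y _ => le_tsub_add
  rw [hzero] at hsum
  omega

end PowerSums

section FlagCoordinates

variable {F : Type} [Field F] {n : ℕ}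

theorem finrank_map_ker_proj {e : (Fin 3 → F) →ₗ[F] Fin n → F} (he : Function.Injective e)
    (i : Fin 3) :
    finrank F ((LinearMap.ker (LinearMap.proj (R := F) (φ := fun _ => F) i)).map e) = 2 := by
  have hi : (LinearMap.proj i : Dual F (Fin 3 → F)) ≠ 0 := fun h =>
    one_ne_zero (α := F) (by simpa using LinearMap.congr_fun h (Pi.single i 1))
  have hker := Dual.finrank_ker_add_one_of_ne_zero hi
  rw [finrank_fin_fun] at hker
  rw [← (Submodule.equivMapOfInjective e he _).finrank_eq]
  omega

theorem linearIndependent_of_flag {M : Type*} [AddCommGroup M] [Module F M] {r b a : M}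
    {ℓ : Submodule F M} (hr0 : r ≠ 0) (hr : r ∈ ℓ) (hb : b ∈ ℓ)
    (hbr : b ∉ Submodule.span F {r}) (ha : a ∉ ℓ) :
    LinearIndependent F ![a, b, r] := by
  have hbrℓ : Submodule.span F (Set.range ![b, r]) ≤ ℓ := by
    rw [Submodule.span_le, Matrix.range_cons_cons_empty]
    exact Set.insert_subset hb (Set.singleton_subset_iff.mpr hr)
  refine linearIndependent_finCons.mpr ⟨linearIndependent_finCons.mpr ⟨?_, ?_⟩,
    fun h => ha (hbrℓ h)⟩
  · exact linearIndependent_unique_iff.mpr hr0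
  · simpa using hbr

theorem exists_flag_coordinates {π ℓ : Submodule F (Fin n → F)} {R : ProjPoint F n}
    (hπ : finrank F π = 3) (hℓ : finrank F ℓ = 2) (hℓπ : ℓ ≤ π) (hR : R ∈ pointsIn F n ℓ) :
    ∃ (e : (Fin 3 → F) →ₗ[F] Fin n → F) (he : Function.Injective e),
      LinearMap.range e = π ∧ (LinearMap.ker (LinearMap.proj 0)).map e = ℓ ∧
        imagePoint e he (verticalPoint F) = R := by
  obtain ⟨r, rfl⟩ := (Projectivization.equivSubmodule F (Fin n → F)).surjective R
  induction r with | h r hr0 =>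
  have hrℓ : r ∈ ℓ := (Submodule.span_singleton_le_iff_mem r ℓ).mp hR
  obtain ⟨b, hbℓ, hbr⟩ : ∃ b ∈ ℓ, b ∉ Submodule.span F {r} :=
    SetLike.exists_of_lt (Submodule.lt_of_le_of_finrank_lt_finrank hR
      (by rw [finrank_span_singleton hr0, hℓ]; norm_num))
  obtain ⟨a, haπ, haℓ⟩ : ∃ a ∈ π, a ∉ ℓ :=
    SetLike.exists_of_lt (Submodule.lt_of_le_of_finrank_lt_finrank hℓπ (by omega))
  let e := Fintype.linearCombination F ![a, b, r]
  have he_apply (v : Fin 3 → F) : e v = v 0 • a + v 1 • b + v 2 • r := by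
    simp [e, Fintype.linearCombination_apply, Fin.sum_univ_three]
  have he : Function.Injective e :=
    linearIndependent_iff_injective_fintypeLinearCombination.mp
      (linearIndependent_of_flag hr0 hrℓ hbℓ hbr haℓ)
  refine ⟨e, he, Submodule.eq_of_le_of_finrank_eq ?_ ?_, Submodule.eq_of_le_of_finrank_eq ?_ ?_,
    Subtype.ext ?_⟩
  · rintro _ ⟨v, rfl⟩
    rw [he_apply]
    exact add_mem (add_mem (π.smul_mem _ haπ) (π.smul_mem _ (hℓπ hbℓ))) (π.smul_mem _ (hℓπ hrℓ))
  · rw [LinearMap.finrank_range_of_inj he, finrank_fin_fun, hπ]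
  · rintro _ ⟨v, hv, rfl⟩
    have hv0 : v 0 = 0 := hv
    rw [he_apply, hv0, zero_smul, zero_add]
    exact add_mem (ℓ.smul_mem _ hbℓ) (ℓ.smul_mem _ hrℓ)
  · rw [finrank_map_ker_proj he, hℓ]
  · rw [verticalPoint, imagePoint_mk_val, he_apply]
    simp [Projectivization.equivSubmodule]

end FlagCoordinates

section Dichotomy

theorem prime_pow_ne_six {p : ℕ} (hp : p.Prime) (h : ℕ) : p ^ h ≠ 6 := by
  intro h6
  have htwo : 2 ∣ p := Nat.prime_two.dvd_of_dvd_pow (n := h) (by omega)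
  have hthree : 3 ∣ p := Nat.prime_three.dvd_of_dvd_pow (n := h) (by omega)
  rw [Nat.prime_dvd_prime_iff_eq (by norm_num) hp] at htwo hthree
  omega

theorem mul_pred_add_lt {q s : ℕ} (hq : 7 ≤ q) (hs : q + 3 ≤ s) (hs' : s + q + 2 ≤ q ^ 2) :
    s * (s - 1) + (q ^ 3 + q ^ 2) < q ^ 2 * s := by
  obtain ⟨a, rfl⟩ := Nat.exists_eq_add_of_le hs
  obtain ⟨b, hb⟩ := Nat.exists_eq_add_of_le hs'
  rw [show q + 3 + a - 1 = q + 2 + a by omega]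
  nlinarith [Nat.zero_le (a * b)]

theorem le_or_le_of_mul_le {p q s : ℕ} (hp : p.Prime) (hq4 : 4 < q) (hq6 : q ≠ 6)
    (hpq : p ∣ q) (hs : s ≡ 1 [MOD p]) (hle : q ^ 2 * s ≤ s * (s - 1) + (q ^ 3 + q ^ 2)) :
    s ≤ q + 1 ∨ q ^ 2 ≤ s + q + 1 := by
  by_contra! ⟨hlow, hhigh⟩
  have hdvd : p ∣ s - (q + 1) := by
    refine (Nat.modEq_iff_dvd' hlow.le).mp (Nat.ModEq.trans ?_ hs.symm)
    simpa using ((Nat.modEq_zero_iff_dvd).mpr hpq).add_right 1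
  have hge : p ≤ s - (q + 1) := Nat.le_of_dvd (by omega) hdvd
  have hp2 := hp.two_le
  obtain hq7 | rfl : 7 ≤ q ∨ q = 5 := by omega
  · exact (mul_pred_add_lt hq7 (by omega) (by omega)).not_ge hle
  · obtain rfl : p = 5 := (Nat.prime_dvd_prime_iff_eq hp Nat.prime_five).mp hpq
    obtain rfl | rfl : s = 11 ∨ s = 16 := by omega
    all_goals omega

variable {F : Type} [Field F] {n p : ℕ} [CharP F p] {V : Set (ProjPoint F n)}
  {π ℓ : Submodule F (Fin n → F)}

theorem secant_modEq_one [Finite F] {q : ℕ} (hV : charVec F p n V ∈ hypCode F p n)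
    (hπ : finrank F π = 3) (hpq : p ∣ q) (hsize : secant F n V π = q ^ 3 + q ^ 2 + 1)
    (hℓ : finrank F ℓ = 2) :
    secant F n V ℓ ≡ 1 [MOD p] := by
  have hπ2 : 2 ≤ finrank F π := by omega
  rw [← ZMod.natCast_eq_natCast_iff, secant_cast_eq_secant_cast hV hℓ.ge hπ2, hsize]
  simp [(ZMod.natCast_eq_zero_iff q p).mpr hpq]

variable [Fintype F]

theorem card_mul_secant_lt (hV : charVec F p n V ∈ hypCode F p n) (hπ : finrank F π = 3)
    (hℓ : finrank F ℓ = 2) (hℓπ : ℓ ≤ π) (hℓV : ¬ pointsIn F n ℓ ⊆ V)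
    (hpos : ∀ m : Submodule F (Fin n → F), finrank F m = 2 → 0 < secant F n V m) :
    Fintype.card F * secant F n V ℓ <
      secant F n V ℓ * (secant F n V ℓ - 1) + secant F n V π := by
  obtain ⟨R, hRℓ, hRV⟩ := Set.not_subset.mp hℓV
  obtain ⟨e, he, rfl, rfl, rfl⟩ := exists_flag_coordinates hπ hℓ hℓπ hRℓ
  have hle := card_mul_secant_add_secant_le hV e he hRV rfl
  have := hpos _ (finrank_map_ker_proj he 1)
  omega

theorem secant_le_or_le {h q : ℕ} (hp : p.Prime) (hq : q = p ^ h) (hq4 : 4 < q)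
    (hF : Fintype.card F = q ^ 2) (hV : charVec F p n V ∈ hypCode F p n) (hπ : finrank F π = 3)
    (hsize : secant F n V π = q ^ 3 + q ^ 2 + 1) (hℓ : finrank F ℓ = 2) (hℓπ : ℓ ≤ π) :
    secant F n V ℓ ≤ q + 1 ∨ q ^ 2 ≤ secant F n V ℓ + q + 1 := by
  have hpq : p ∣ q := hq ▸ dvd_pow_self p (by rintro rfl; simp_all)
  by_cases hℓV : pointsIn F n ℓ ⊆ V
  · right
    rw [secant, Set.inter_eq_right.mpr hℓV, ncard_pointsIn, hℓ, Nat.card_eq_fintype_card, hF]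
    simp only [Finset.sum_range_succ, Finset.range_zero, Finset.sum_empty, pow_one]
    omega
  · refine le_or_le_of_mul_le hp hq4 (hq ▸ prime_pow_ne_six hp h) hpq
      (secant_modEq_one hV hπ hpq hsize hℓ) ?_
    have hpos (m : Submodule F (Fin n → F)) (hm : finrank F m = 2) : 0 < secant F n V m := by
      refine Nat.pos_of_ne_zero fun h0 => hp.one_lt.ne' ?_
      have := secant_modEq_one hV hπ hpq hsize hm
      rw [h0] at this
      exact Nat.dvd_one.mp ((Nat.modEq_zero_iff_dvd).mp this.symm)
    have := card_mul_secant_lt hV hπ hℓ hℓπ hℓV hpos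
    rw [hF, hsize] at this
    omega

theorem isShortLongSet_coordinateSet [DecidableEq F] {h q : ℕ} (hp : p.Prime) (hq : q = p ^ h)
    (hq4 : 4 < q) (hF : Fintype.card F = q ^ 2) (hV : charVec F p n V ∈ hypCode F p n)
    {e : (Fin 3 → F) →ₗ[F] Fin n → F} (he : Function.Injective e)
    (hsize : secant F n V (LinearMap.range e) = q ^ 3 + q ^ 2 + 1) :
    IsShortLongSet (Projectivization F (Fin 3 → F)) q (coordinateSet e he V) where
  order_eq := by rw [order_ofField, Nat.card_eq_fintype_card, hF]
  five_le := hq4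
  card_eq := by rw [card_coordinateSet, hsize]
  short_or_long w := by
    rw [lineCard_coordinateSet]
    refine secant_le_or_le hp hq hq4 hF hV ?_ hsize ?_ LinearMap.map_le_range
    · rw [LinearMap.finrank_range_of_inj he, finrank_fin_fun]
    · rw [← (Submodule.equivMapOfInjective e he _).finrank_eq, finrank_lineSubmodule]

end Dichotomy

theorem stmt11_general (p h q n : ℕ) (hp : p.Prime) (hq : q = p ^ h) (hq4 : 4 < q)
    (F : Type) [Field F] [Fintype F] (hF : Fintype.card F = q ^ 2) (V : Set (ProjPoint F n))
    (hcode : charVec F p n V ∈ hypCode F p n) (π : Submodule F (Fin n → F))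
    (hπ : finrank F π = 3) (hsize : secant F n V π = q ^ 3 + q ^ 2 + 1) :
    ∀ ℓ : Submodule F (Fin n → F), ℓ ≤ π → finrank F ℓ = 2 →
      secant F n V ℓ = 1 ∨ secant F n V ℓ = q + 1 ∨ secant F n V ℓ = q ^ 2 + 1 := by
  classical
  have : Fact p.Prime := ⟨hp⟩
  have : CharP F p := charP_of_card_eq_prime_pow (f := h * 2) (by rw [hF, hq, pow_mul])
  let f : (Fin 3 → F) ≃ₗ[F] π := LinearEquiv.ofFinrankEq _ _ (by rw [finrank_fin_fun, hπ])
  let e := π.subtype ∘ₗ f.toLinearMap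
  have he : Function.Injective e := π.injective_subtype.comp f.injective
  have hrange : LinearMap.range e = π := by
    rw [LinearMap.range_comp, LinearEquiv.range, Submodule.map_subtype_top]
  intro ℓ hℓπ hℓ
  have hmap : (ℓ.comap e).map e = ℓ := Submodule.map_comap_eq_of_le (hrange.symm ▸ hℓπ)
  obtain ⟨w, hw⟩ := exists_lineSubmodule_eq (U := ℓ.comap e)
    ((Submodule.equivMapOfInjective e he _).finrank_eq.trans (hmap.symm ▸ hℓ))
  rw [← hmap, ← hw, ← lineCard_coordinateSet e he]
  exact (isShortLongSet_coordinateSet hp hq hq4 hF hcode he (hrange.symm ▸ hsize)).lineCard_eq w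

/-- in PG(3, q²), if a plane `π` meets `V` in `q³ + q² + 1` points,
then every line of `π` meets `π ∩ V` in `1`, `q + 1` or `q² + 1` points. -/
theorem stmt11 (p h q : ℕ) (hp : p.Prime) (hh : 1 ≤ h) (hq : q = p ^ h) (hq4 : 4 < q)
    (F : Type) [Field F] [Fintype F] (hF : Fintype.card F = q ^ 2)
    (V : Set (ProjPoint F (3 + 1))) (hV : IsQuasiHermitian F q 3 V)
    (hcode : charVec F p (3 + 1) V ∈ hypCode F p (3 + 1))
    (π : Submodule F (Fin (3 + 1) → F)) (hπ : finrank F π = 3)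
    (hsize : secant F (3 + 1) V π = q ^ 3 + q ^ 2 + 1) :
    ∀ ℓ : Submodule F (Fin (3 + 1) → F), ℓ ≤ π → finrank F ℓ = 2 →
      secant F (3 + 1) V ℓ = 1 ∨ secant F (3 + 1) V ℓ = q + 1 ∨
        secant F (3 + 1) V ℓ = q ^ 2 + 1 :=
  stmt11_general p h q (3 + 1) hp hq hq4 F hF V hcode π hπ hsize
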